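/- Every tuple of reflections of G4 that contains at least four entries from a single conjugacy class has, in its Hurwitz orbit, a tuple with two consecutive equal entries. -/

import Mathlib

noncomputable section

open Matrix Complex

/-- The `i`-th Hurwitz move on length-`k` tuples of group elements. -/
def IsHurwitzMove {G : Type*} [Group G] {k : ℕ} (t t' : Fin k → G) : Prop :=
  ∃ i : ℕ, ∃ h : i + 1 < k,
    t' ⟨i, Nat.lt_of_succ_lt h⟩ = t ⟨i + 1, h⟩ ∧
    t' ⟨i + 1, h⟩ = (t ⟨i + 1, h⟩)⁻¹ * t ⟨i, Nat.lt_of_succ_lt h⟩ * t ⟨i + 1, h⟩ ∧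
    ∀ j : Fin k, (j : ℕ) ≠ i → (j : ℕ) ≠ i + 1 → t' j = t j

/-- Two tuples lie in the same Hurwitz orbit. -/
def SameHurwitzOrbit {G : Type*} [Group G] {k : ℕ} (t t' : Fin k → G) : Prop :=
  Relation.EqvGen IsHurwitzMove t t'

/-- A group element `r` appears (as an entry) in the Hurwitz orbit of the tuple `t`. -/
def Appears {G : Type*} [Group G] {k : ℕ} (r : G) (t : Fin k → G) : Prop :=
  ∃ s : Fin k → G, SameHurwitzOrbit t s ∧ ∃ j, s j = r

/-- A tuple has two consecutive equal entries. -/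
def HasConsecutiveEqualPair {G : Type*} [Group G] {k : ℕ} (t : Fin k → G) : Prop :=
  ∃ i : ℕ, ∃ h : i + 1 < k, t ⟨i, Nat.lt_of_succ_lt h⟩ = t ⟨i + 1, h⟩

/-- Replace the `p`-th entry of a tuple by two consecutive copies of its square. -/
def doubleAt {G : Type*} [Group G] {m : ℕ} (t : Fin m → G) (p : Fin m) : Fin (m + 1) → G :=
  fun j =>
    if h1 : (j : ℕ) < (p : ℕ) then t ⟨j, h1.trans p.isLt⟩
    else if h2 : (j : ℕ) ≤ (p : ℕ) + 1 then (t p) ^ 2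
    else t ⟨(j : ℕ) - 1, by have := j.isLt; omega⟩

/-- `ω = e^(2πi/3)`. -/
def ω : ℂ := Complex.exp (2 * Real.pi * Complex.I / 3)

def AMat : Matrix (Fin 2) (Fin 2) ℂ := !![1, 0; 0, ω]

def BMat : Matrix (Fin 2) (Fin 2) ℂ :=
  !![(ω - ω ^ 2) / 3, ω ^ 2; (-2 * ω ^ 2) / 3, (-ω - 2 * ω ^ 2) / 3]

/-- The complex reflection group G₄ as the subgroup of GL(2,ℂ) generated by `AMat`, `BMat`. -/
def G4 : Subgroup (GL (Fin 2) ℂ) :=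
  Subgroup.closure {g : GL (Fin 2) ℂ |
    (g : Matrix (Fin 2) (Fin 2) ℂ) = AMat ∨ (g : Matrix (Fin 2) (Fin 2) ℂ) = BMat}

/-- The matrix underlying an element of G₄. -/
def mat (t : G4) : Matrix (Fin 2) (Fin 2) ℂ := ((t : GL (Fin 2) ℂ) : Matrix (Fin 2) (Fin 2) ℂ)

/-- A reflection in G₄: a non-identity element with eigenvalue 1. -/
def IsReflection (t : G4) : Prop := t ≠ 1 ∧ (mat t - 1).det = 0

/-- The conjugacy class R₁ of reflections of determinant ω. -/
def R1 : Set G4 := {t | IsReflection t ∧ (mat t).det = ω}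

/-- The conjugacy class R₂ of reflections of determinant ω². -/
def R2 : Set G4 := {t | IsReflection t ∧ (mat t).det = ω ^ 2}

/-- A Coxeter element of G₄: an element with a primitive 6th root of unity as eigenvalue. -/
def IsCoxeter (c : G4) : Prop :=
  ∃ ζ : ℂ, IsPrimitiveRoot ζ 6 ∧ (mat c - ζ • (1 : Matrix (Fin 2) (Fin 2) ℂ)).det = 0

/-- The relators of G₅: a³, b³, abab(baba)⁻¹. -/
def g5Rels : Set (FreeGroup (Fin 2)) :=
  {FreeGroup.of 0 ^ 3, FreeGroup.of 1 ^ 3,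
    FreeGroup.of 0 * FreeGroup.of 1 * FreeGroup.of 0 * FreeGroup.of 1 *
      (FreeGroup.of 1 * FreeGroup.of 0 * FreeGroup.of 1 * FreeGroup.of 0)⁻¹}

/-- The complex reflection group G₅, by its presentation ⟨a,b | a³ = b³ = 1, abab = baba⟩. -/
abbrev G5 := PresentedGroup g5Rels

def ga : G5 := PresentedGroup.of 0
def gb : G5 := PresentedGroup.of 1

/-- The conjugacy class of `a` in G₅. -/
def S1 : Set G5 := {t | IsConj ga t}
/-- The conjugacy class of `b` in G₅. -/
def S2 : Set G5 := {t | IsConj gb t}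
/-- The conjugacy class of `a²` in G₅. -/
def S3 : Set G5 := {t | IsConj (ga ^ 2) t}
/-- The conjugacy class of `b²` in G₅. -/
def S4 : Set G5 := {t | IsConj (gb ^ 2) t}

/-- A reflection in G₅: a conjugate of a, b, a², or b². -/
def IsReflection5 (t : G5) : Prop := t ∈ S1 ∨ t ∈ S2 ∨ t ∈ S3 ∨ t ∈ S4

/-- A Coxeter element of G₅: an element of order 12. -/
def IsCoxeter5 (c : G5) : Prop := orderOf c = 12

/-!
Conjugation-invariant data of a tuple are merely permuted by Hurwitz moves, so four entries lying in
a conjugation-closed set `S` may be moved to the front. Moves on two entries `x`, `y` alone bring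
each of `x`, `y`, `y⁻¹xy` to the left place and each of `x`, `y`, `xyx⁻¹` to the right place. If
distinct elements of `S` never commute, then both sets have three elements, and two such triples,
one from the first pair and one from the second, share an element as soon as `S` has at most five
elements.

For `G₄`, write `a`, `b` for the generators. They satisfy `a³ = 1` and `aba = bab`, which forces
`z = (aba)²` to be central and yields a Bruhat decomposition into elements `zᵐaⁱ` and `zᵐaⁱbaʲ`.
Here `z = -1`, and `x`, `-x` are never both reflections of determinant `ω`, so comparing
determinants leaves only `a`, `b`, `aba⁻¹`, `a²ba⁻²` as reflections of determinant `ω`. All of them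
are conjugate to `a`, and `a` commutes with none of the other three. The reflections of determinant
`ω²` are the inverses of these.
-/

section Hurwitz

variable {G : Type*} [Group G] {k : ℕ} {i j : Fin k}

/-- The Hurwitz move at the places `i` and `j`; meaningful only for `j = i + 1`. -/
def hurwitzMove (i j : Fin k) (t : Fin k → G) : Fin k → G :=
  Function.update (Function.update t i (t j)) j ((t j)⁻¹ * t i * t j)

/-- The inverse Hurwitz move at the places `i` and `j`; meaningful only for `j = i + 1`. -/
def hurwitzMoveInv (i j : Fin k) (t : Fin k → G) : Fin k → G :=
  Function.update (Function.update t i (t i * t j * (t i)⁻¹)) j (t i)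

lemma hurwitzMove_left (hij : i ≠ j) (t : Fin k → G) : hurwitzMove i j t i = t j := by
  simp [hurwitzMove, hij]

lemma hurwitzMove_right (i j : Fin k) (t : Fin k → G) :
    hurwitzMove i j t j = (t j)⁻¹ * t i * t j := by
  simp [hurwitzMove]

lemma hurwitzMove_of_ne {l : Fin k} (hi : l ≠ i) (hj : l ≠ j) (t : Fin k → G) :
    hurwitzMove i j t l = t l := by
  simp [hurwitzMove, hi, hj]

lemma hurwitzMoveInv_left (hij : i ≠ j) (t : Fin k → G) :
    hurwitzMoveInv i j t i = t i * t j * (t i)⁻¹ := by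
  simp [hurwitzMoveInv, hij]

lemma hurwitzMoveInv_right (i j : Fin k) (t : Fin k → G) : hurwitzMoveInv i j t j = t i := by
  simp [hurwitzMoveInv]

lemma hurwitzMoveInv_of_ne {l : Fin k} (hi : l ≠ i) (hj : l ≠ j) (t : Fin k → G) :
    hurwitzMoveInv i j t l = t l := by
  simp [hurwitzMoveInv, hi, hj]

lemma hurwitzMove_hurwitzMoveInv (hij : i ≠ j) (t : Fin k → G) :
    hurwitzMove i j (hurwitzMoveInv i j t) = t := by
  ext l
  by_cases hj : l = j
  · subst hj
    rw [hurwitzMove_right, hurwitzMoveInv_right, hurwitzMoveInv_left hij]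
    group
  by_cases hi : l = i
  · subst hi
    rw [hurwitzMove_left hij, hurwitzMoveInv_right]
  · rw [hurwitzMove_of_ne hi hj, hurwitzMoveInv_of_ne hi hj]

lemma sameHurwitzOrbit_refl (t : Fin k → G) : SameHurwitzOrbit t t := .refl t

lemma sameHurwitzOrbit_trans {t s r : Fin k → G} (hts : SameHurwitzOrbit t s)
    (hsr : SameHurwitzOrbit s r) : SameHurwitzOrbit t r := .trans _ _ _ hts hsr

lemma ne_of_val_succ_eq (hij : (i : ℕ) + 1 = j) : i ≠ j := by
  rintro rfl
  omega

lemma sameHurwitzOrbit_hurwitzMove (hij : (i : ℕ) + 1 = j) (t : Fin k → G) :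
    SameHurwitzOrbit t (hurwitzMove i j t) := by
  have hne := ne_of_val_succ_eq hij
  obtain ⟨j, hj⟩ := j
  obtain rfl : (i : ℕ) + 1 = j := hij
  exact .rel _ _ ⟨i, hj, hurwitzMove_left hne t, hurwitzMove_right _ _ t,
    fun l hi hj ↦ hurwitzMove_of_ne (mt (congrArg Fin.val) hi) (mt (congrArg Fin.val) hj) t⟩

lemma sameHurwitzOrbit_hurwitzMoveInv (hij : (i : ℕ) + 1 = j) (t : Fin k → G) :
    SameHurwitzOrbit t (hurwitzMoveInv i j t) := by
  have h := sameHurwitzOrbit_hurwitzMove hij (hurwitzMoveInv i j t)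
  rw [hurwitzMove_hurwitzMoveInv (ne_of_val_succ_eq hij)] at h
  exact .symm _ _ h

lemma hasConsecutiveEqualPair_of_eq {t : Fin k → G} (hij : (i : ℕ) + 1 = j) (h : t i = t j) :
    HasConsecutiveEqualPair t := by
  obtain ⟨j, hj⟩ := j
  obtain rfl : (i : ℕ) + 1 = j := hij
  exact ⟨i, _, h⟩

lemma exists_sameHurwitzOrbit_left_eq (hij : (i : ℕ) + 1 = j) (t : Fin k → G) {x : G}
    (hx : x ∈ ({t i, t j, (t j)⁻¹ * t i * t j} : Set G)) :
    ∃ s, SameHurwitzOrbit t s ∧ s i = x ∧ ∀ l, l ≠ i → l ≠ j → s l = t l := by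
  have hne := ne_of_val_succ_eq hij
  have hmove := sameHurwitzOrbit_hurwitzMove (G := G) hij
  rcases hx with rfl | rfl | rfl
  · exact ⟨t, sameHurwitzOrbit_refl t, rfl, fun _ _ _ ↦ rfl⟩
  · exact ⟨_, hmove t, hurwitzMove_left hne t, fun _ hi hj ↦ hurwitzMove_of_ne hi hj t⟩
  · refine ⟨_, sameHurwitzOrbit_trans (hmove t) (hmove _), ?_, fun l hi hj ↦ ?_⟩
    · rw [hurwitzMove_left hne, hurwitzMove_right]
    · rw [hurwitzMove_of_ne hi hj, hurwitzMove_of_ne hi hj]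

lemma exists_sameHurwitzOrbit_right_eq (hij : (i : ℕ) + 1 = j) (t : Fin k → G) {x : G}
    (hx : x ∈ ({t j, t i, t i * t j * (t i)⁻¹} : Set G)) :
    ∃ s, SameHurwitzOrbit t s ∧ s j = x ∧ ∀ l, l ≠ i → l ≠ j → s l = t l := by
  have hmove := sameHurwitzOrbit_hurwitzMoveInv (G := G) hij
  rcases hx with rfl | rfl | rfl
  · exact ⟨t, sameHurwitzOrbit_refl t, rfl, fun _ _ _ ↦ rfl⟩
  · exact ⟨_, hmove t, hurwitzMoveInv_right i j t, fun _ hi hj ↦ hurwitzMoveInv_of_ne hi hj t⟩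
  · refine ⟨_, sameHurwitzOrbit_trans (hmove t) (hmove _), ?_, fun l hi hj ↦ ?_⟩
    · rw [hurwitzMoveInv_right, hurwitzMoveInv_left (ne_of_val_succ_eq hij)]
    · rw [hurwitzMoveInv_of_ne hi hj, hurwitzMoveInv_of_ne hi hj]

lemma apply_hurwitzMove_eq_apply_swap {α : Type*} {f : G → α}
    (hf : ∀ g x, f (g * x * g⁻¹) = f x) (hij : i ≠ j) (t : Fin k → G) (l : Fin k) :
    f (hurwitzMove i j t l) = f (t (Equiv.swap i j l)) := by
  by_cases hj : l = j
  · subst hj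
    simpa only [hurwitzMove_right, Equiv.swap_apply_right, inv_inv] using hf (t l)⁻¹ (t i)
  by_cases hi : l = i
  · subst hi
    rw [hurwitzMove_left hij, Equiv.swap_apply_left]
  · rw [hurwitzMove_of_ne hi hj, Equiv.swap_apply_of_ne_of_ne hi hj]

lemma exists_sameHurwitzOrbit_apply_eq_apply_perm {α : Type*} {f : G → α}
    (hf : ∀ g x, f (g * x * g⁻¹) = f x) (σ : Equiv.Perm (Fin k)) (t : Fin k → G) :
    ∃ s, SameHurwitzOrbit t s ∧ ∀ l, f (s l) = f (t (σ l)) := by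
  cases k with
  | zero => exact ⟨t, sameHurwitzOrbit_refl t, fun l ↦ l.elim0⟩
  | succ n =>
    have hσ : σ ∈ Submonoid.closure (Set.range fun l : Fin n ↦ Equiv.swap l.castSucc l.succ) :=
      Equiv.Perm.mclosure_swap_castSucc_succ n ▸ Submonoid.mem_top σ
    induction hσ using Submonoid.closure_induction generalizing t with
    | mem σ hσ =>
      obtain ⟨m, rfl⟩ := hσ
      have hm : (m.castSucc : ℕ) + 1 = m.succ := by simp
      exact ⟨_, sameHurwitzOrbit_hurwitzMove hm t,
        apply_hurwitzMove_eq_apply_swap hf (ne_of_val_succ_eq hm) t⟩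
    | one => exact ⟨t, sameHurwitzOrbit_refl t, fun _ ↦ rfl⟩
    | mul σ τ _ _ ihσ ihτ =>
      obtain ⟨s, hts, hs⟩ := ihσ t
      obtain ⟨r, hsr, hr⟩ := ihτ s
      exact ⟨r, sameHurwitzOrbit_trans hts hsr, fun l ↦ (hr l).trans (hs (τ l))⟩

lemma exists_sameHurwitzOrbit_forall_apply_mem {S : Set G}
    (hS : ∀ g, ∀ x ∈ S, g * x * g⁻¹ ∈ S) {n : ℕ} (e : Fin n ↪ Fin k) (t : Fin k → G)
    (hn : n ≤ {l | t l ∈ S}.ncard) :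
    ∃ s, SameHurwitzOrbit t s ∧ ∀ l, s (e l) ∈ S := by
  have hmem (g x : G) : (g * x * g⁻¹ ∈ S) = (x ∈ S) :=
    propext ⟨fun h ↦ by simpa [mul_assoc] using hS g⁻¹ _ h, hS g x⟩
  obtain ⟨e'⟩ : Nonempty (Fin n ↪ {l | t l ∈ S}) := by
    classical
    rwa [Function.Embedding.nonempty_iff_card_le, Fintype.card_fin, ← Nat.card_eq_fintype_card]
  obtain ⟨σ, hσ⟩ := Equiv.Perm.exists_extending_pair e (fun l ↦ (e' l : Fin k)) e.injective
    (Subtype.val_injective.comp e'.injective)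
  obtain ⟨s, hts, hs⟩ := exists_sameHurwitzOrbit_apply_eq_apply_perm hmem σ t
  refine ⟨s, hts, fun l ↦ ?_⟩
  rw [hs, hσ]
  exact (e' l).2

end Hurwitz

section Merging

variable {G : Type*} [Group G] {S : Set G}

/-- A conjugation-closed set of at most five pairwise noncommuting elements, so that Hurwitz moves
turn any four of its elements into a tuple with two consecutive equal entries. The bound is the
largest for which two three-element subsets are forced to meet. -/
structure IsHurwitzMerging (S : Set G) : Prop where
  conj_mem : ∀ g, ∀ x ∈ S, g * x * g⁻¹ ∈ S
  pairwise_not_commute : S.Pairwise fun x y ↦ ¬Commute x y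
  encard_le_five : S.encard ≤ 5

lemma IsHurwitzMerging.inv (hS : IsHurwitzMerging S) : IsHurwitzMerging S⁻¹ where
  conj_mem g x hx := by
    simpa only [Set.mem_inv, _root_.mul_inv_rev, inv_inv, mul_assoc] using hS.conj_mem g _ hx
  pairwise_not_commute x hx y hy hxy h :=
    hS.pairwise_not_commute hx hy (inv_injective.ne hxy) h.inv_inv
  encard_le_five := by
    rw [Set.encard_inv]
    exact hS.encard_le_five

lemma encard_insert_conj_eq_three {g x y : G} (hgx : ¬Commute g x) (hgy : Commute g y) :
    ({x, y, g * x * g⁻¹} : Set G).encard = 3 := by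
  refine Set.encard_eq_three.2 ⟨x, y, g * x * g⁻¹, ?_, ?_, ?_, rfl⟩
  · rintro rfl
    exact hgx hgy
  · intro h
    exact hgx (mul_inv_eq_iff_eq_mul.1 h.symm)
  · intro h
    obtain rfl : x = y := by rw [← hgy.inv_mul_cancel, h]; group
    exact hgx hgy

lemma inter_nonempty_of_encard_eq_three {α : Type*} {S T U : Set α} (hS : S.encard ≤ 5)
    (hTS : T ⊆ S) (hUS : U ⊆ S) (hT : T.encard = 3) (hU : U.encard = 3) : (T ∩ U).Nonempty := by
  by_contra h
  have hdisj : Disjoint T U := Set.disjoint_iff_inter_eq_empty.2 (Set.not_nonempty_iff_eq_empty.1 h)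
  have hle := (Set.encard_le_encard (Set.union_subset hTS hUS)).trans hS
  rw [Set.encard_union_eq hdisj, hT, hU] at hle
  exact absurd hle (by decide)

lemma IsHurwitzMerging.inter_nonempty (hS : IsHurwitzMerging S) {p q u v : G} (hp : p ∈ S)
    (hq : q ∈ S) (hu : u ∈ S) (hv : v ∈ S) (hpq : p ≠ q) (huv : u ≠ v) :
    (({q, p, p * q * p⁻¹} : Set G) ∩ {u, v, v⁻¹ * u * v}).Nonempty := by
  refine inter_nonempty_of_encard_eq_three hS.encard_le_five ?_ ?_ ?_ ?_
  · simp [Set.insert_subset_iff, hp, hq, hS.conj_mem p q hq]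
  · simpa [Set.insert_subset_iff, hu, hv] using hS.conj_mem v⁻¹ u hu
  · exact encard_insert_conj_eq_three (hS.pairwise_not_commute hp hq hpq) (.refl p)
  · have hvu : ¬Commute v⁻¹ u := by
      rw [Commute.inv_left_iff]
      exact hS.pairwise_not_commute hv hu huv.symm
    simpa only [inv_inv] using encard_insert_conj_eq_three hvu (Commute.refl v).inv_left

lemma IsHurwitzMerging.exists_hasConsecutiveEqualPair_of_forall_mem (hS : IsHurwitzMerging S)
    {k : ℕ} (hk : 4 ≤ k) {t : Fin k → G} (ht : ∀ l, t (Fin.castLE hk l) ∈ S) :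
    ∃ s, SameHurwitzOrbit t s ∧ HasConsecutiveEqualPair s := by
  set c := Fin.castLE hk
  have h01 : (c 0 : ℕ) + 1 = c 1 := rfl
  have h12 : (c 1 : ℕ) + 1 = c 2 := rfl
  have h23 : (c 2 : ℕ) + 1 = c 3 := rfl
  have hc : Function.Injective c := Fin.castLE_injective hk
  by_cases hpq : t (c 0) = t (c 1)
  · exact ⟨t, sameHurwitzOrbit_refl t, hasConsecutiveEqualPair_of_eq h01 hpq⟩
  by_cases huv : t (c 2) = t (c 3)
  · exact ⟨t, sameHurwitzOrbit_refl t, hasConsecutiveEqualPair_of_eq h23 huv⟩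
  obtain ⟨x, hx01, hx23⟩ := hS.inter_nonempty (ht 0) (ht 1) (ht 2) (ht 3) hpq huv
  obtain ⟨s, hts, hs1, hs⟩ := exists_sameHurwitzOrbit_right_eq h01 t hx01
  have hs2 : s (c 2) = t (c 2) := hs _ (hc.ne (by decide)) (hc.ne (by decide))
  have hs3 : s (c 3) = t (c 3) := hs _ (hc.ne (by decide)) (hc.ne (by decide))
  rw [← hs2, ← hs3] at hx23
  obtain ⟨r, hsr, hr2, hr⟩ := exists_sameHurwitzOrbit_left_eq h23 s hx23
  have hr1 : r (c 1) = s (c 1) := hr _ (hc.ne (by decide)) (hc.ne (by decide))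
  exact ⟨r, sameHurwitzOrbit_trans hts hsr,
    hasConsecutiveEqualPair_of_eq h12 (by rw [hr1, hs1, hr2])⟩

theorem IsHurwitzMerging.exists_hasConsecutiveEqualPair (hS : IsHurwitzMerging S) {k : ℕ}
    {t : Fin k → G} (h4 : 4 ≤ {l | t l ∈ S}.ncard) :
    ∃ s, SameHurwitzOrbit t s ∧ HasConsecutiveEqualPair s := by
  have hk : 4 ≤ k := by simpa using h4.trans (Set.ncard_le_card _)
  obtain ⟨s, hts, hs⟩ :=
    exists_sameHurwitzOrbit_forall_apply_mem hS.conj_mem (Fin.castLEEmb hk) t h4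
  obtain ⟨r, hsr, hr⟩ := hS.exists_hasConsecutiveEqualPair_of_forall_mem hk hs
  exact ⟨r, sameHurwitzOrbit_trans hts hsr, hr⟩

end Merging

section Braid

variable {G : Type*} [Group G] {a b : G}

lemma isConj_of_braid (hab : a * b * a = b * a * b) : IsConj a b :=
  isConj_iff.2 ⟨a * b, by rw [hab]; group⟩

lemma eq_of_braid_of_commute (hab : a * b * a = b * a * b) (hcomm : Commute a b) : a = b := by
  rw [hcomm.eq] at hab
  exact mul_left_cancel hab

lemma pow_three_eq_one_of_braid (ha : a ^ 3 = 1) (hab : a * b * a = b * a * b) : b ^ 3 = 1 := by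
  obtain ⟨c, rfl⟩ := isConj_iff.1 (isConj_of_braid hab)
  rw [conj_pow, ha]
  group

/-- The square of the Garside element `aba`, which is central in the group generated by two
elements `a` and `b` satisfying the braid relation. -/
def fullTwist (a b : G) : G := (a * b * a) ^ 2

lemma commute_fullTwist_left (hab : a * b * a = b * a * b) : Commute (fullTwist a b) a := by
  have h₁ : SemiconjBy (a * b * a) a b := by
    rw [SemiconjBy]
    nth_rw 1 [hab]
    simp only [mul_assoc]
  have h₂ : SemiconjBy (a * b * a) b a := by
    rw [SemiconjBy]
    nth_rw 2 [hab]
    simp only [mul_assoc]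
  rw [fullTwist, sq]
  exact h₂.mul_left h₁

lemma commute_fullTwist_right (hab : a * b * a = b * a * b) : Commute (fullTwist a b) b := by
  rw [fullTwist, hab]
  exact commute_fullTwist_left hab.symm

lemma mul_sq_mul_eq_fullTwist_mul (ha : a ^ 3 = 1) (hab : a * b * a = b * a * b) :
    b * a ^ 2 * b = fullTwist a b * a := by
  have hz : a * (b * a ^ 2 * b) * a = fullTwist a b := by simp only [fullTwist, sq, mul_assoc]
  refine mul_left_cancel (a := a) (mul_right_cancel (b := a) ?_)
  calc a * (b * a ^ 2 * b) * a = fullTwist a b * a ^ 3 := by rw [hz, ha, mul_one]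
    _ = fullTwist a b * a * a * a := by simp only [pow_three', mul_assoc]
    _ = a * (fullTwist a b * a) * a := by
      rw [← mul_assoc a, ← (commute_fullTwist_left hab).eq]

lemma mul_self_eq_fullTwist_mul (ha : a ^ 3 = 1) (hab : a * b * a = b * a * b) :
    b * b = fullTwist a b * (a ^ 2 * b * a ^ 2) := by
  have hb := pow_three_eq_one_of_braid ha hab
  have hz : b * a * (b * b) * (a * b) = fullTwist a b := by
    simp only [fullTwist, hab, sq, mul_assoc]
  have hba : Commute (b * a) (fullTwist a b) :=
    (commute_fullTwist_right hab).symm.mul_left (commute_fullTwist_left hab).symm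
  refine mul_left_cancel (a := b * a) (mul_right_cancel (b := a * b) ?_)
  calc b * a * (b * b) * (a * b) = fullTwist a b * (b * a ^ 3 * b * a ^ 3 * b) := by
        rw [hz, ha, mul_one, mul_one, ← pow_three', hb, mul_one]
    _ = fullTwist a b * (b * a) * (a ^ 2 * b * a ^ 2) * (a * b) := by
      simp only [pow_succ, pow_zero, one_mul, mul_assoc]
    _ = b * a * (fullTwist a b * (a ^ 2 * b * a ^ 2)) * (a * b) := by
      rw [← hba.eq]
      simp only [mul_assoc]

/-- Membership of `g` in one of the two Bruhat cells `⟨z⟩⟨a⟩` and `⟨z⟩⟨a⟩b⟨a⟩`, where `z` is the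
full twist of `a` and `b`. Natural exponents suffice when `a` has finite order. -/
def IsBruhatWord (a b g : G) : Prop :=
  ∃ m i : ℕ, g = fullTwist a b ^ m * a ^ i ∨
    ∃ j : ℕ, g = fullTwist a b ^ m * (a ^ i * b * a ^ j)

namespace IsBruhatWord

variable {g : G}

lemma mul_left_fst (hab : a * b * a = b * a * b) (hg : IsBruhatWord a b g) :
    IsBruhatWord a b (a * g) := by
  have hcomm (m : ℕ) (x : G) : a * (fullTwist a b ^ m * x) = fullTwist a b ^ m * (a * x) :=
    ((commute_fullTwist_left hab).pow_left m).symm.left_comm x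
  obtain ⟨m, i, rfl | ⟨j, rfl⟩⟩ := hg
  · exact ⟨m, i + 1, .inl (by rw [hcomm, pow_succ'])⟩
  · exact ⟨m, i + 1, .inr ⟨j, by simp only [hcomm, pow_succ', mul_assoc]⟩⟩

lemma mul_left_snd (ha : a ^ 3 = 1) (hab : a * b * a = b * a * b) (hg : IsBruhatWord a b g) :
    IsBruhatWord a b (b * g) := by
  have hcomm (m : ℕ) (x : G) : b * (fullTwist a b ^ m * x) = fullTwist a b ^ m * (b * x) :=
    ((commute_fullTwist_right hab).pow_left m).symm.left_comm x
  obtain ⟨m, i, rfl | ⟨j, rfl⟩⟩ := hg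
  · exact ⟨m, 0, .inr ⟨i, by rw [hcomm, pow_zero, one_mul]⟩⟩
  rw [hcomm, pow_eq_pow_mod i ha]
  have hi : i % 3 < 3 := Nat.mod_lt _ (by norm_num)
  interval_cases i % 3
  · refine ⟨m + 1, 2, .inr ⟨2 + j, ?_⟩⟩
    calc fullTwist a b ^ m * (b * (a ^ 0 * b * a ^ j))
        = fullTwist a b ^ m * (b * b * a ^ j) := by group
      _ = _ := by
        rw [mul_self_eq_fullTwist_mul ha hab]
        simp only [pow_succ (fullTwist a b), pow_add a, mul_assoc]
  · refine ⟨m, 1, .inr ⟨1 + j, ?_⟩⟩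
    calc fullTwist a b ^ m * (b * (a ^ 1 * b * a ^ j))
        = fullTwist a b ^ m * (b * a * b * a ^ j) := by group
      _ = _ := by
        rw [← hab]
        simp only [pow_add, pow_one, mul_assoc]
  · refine ⟨m + 1, 1 + j, .inl ?_⟩
    calc fullTwist a b ^ m * (b * (a ^ 2 * b * a ^ j))
        = fullTwist a b ^ m * (b * a ^ 2 * b * a ^ j) := by group
      _ = _ := by
        rw [mul_sq_mul_eq_fullTwist_mul ha hab]
        simp only [pow_succ (fullTwist a b), pow_add, pow_one, mul_assoc]

end IsBruhatWord

theorem isBruhatWord_of_mem_closure (ha : a ^ 3 = 1) (hab : a * b * a = b * a * b) {g : G}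
    (hg : g ∈ Subgroup.closure {a, b}) : IsBruhatWord a b g := by
  have hmul {x y : G} (hx : x = a ∨ x = b) (hy : IsBruhatWord a b y) :
      IsBruhatWord a b (x * y) := by
    rcases hx with rfl | rfl
    exacts [hy.mul_left_fst hab, hy.mul_left_snd ha hab]
  induction hg using Subgroup.closure_induction_left with
  | one => exact ⟨0, 0, .inl (by simp)⟩
  | mul_left x hx y _ ih => exact hmul hx ih
  | inv_mul_cancel x hx y _ ih =>
    have hx3 : x ^ 3 = 1 := by
      rcases hx with rfl | rfl
      exacts [ha, pow_three_eq_one_of_braid ha hab]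
    have hinv : x⁻¹ = x * x := inv_eq_of_mul_eq_one_right (by rw [← hx3, pow_three])
    rw [hinv, mul_assoc]
    exact hmul hx (hmul hx ih)

end Braid

section ReflectionGroup

lemma isPrimitiveRoot_ω : IsPrimitiveRoot ω 3 := by
  simpa [ω] using Complex.isPrimitiveRoot_exp 3 (by norm_num)

lemma ω_sq : ω ^ 2 = -1 - ω := by
  have h := isPrimitiveRoot_ω.geom_sum_eq_zero (by norm_num)
  simp only [Finset.sum_range_succ, Finset.sum_range_zero] at h
  linear_combination h

lemma ω_ne_neg_one : ω ≠ -1 := by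
  intro h
  have h3 := isPrimitiveRoot_ω.pow_eq_one
  rw [h] at h3
  norm_num at h3

lemma det_AMat : AMat.det = ω := by
  simp [AMat, Matrix.det_fin_two]

lemma det_BMat : BMat.det = ω := by
  simp only [BMat, Matrix.det_fin_two_of, ω_sq]
  linear_combination (8 / 9 : ℂ) * ω_sq

lemma AMat_pow (n : ℕ) : AMat ^ n = !![1, 0; 0, ω ^ n] := by
  induction n with
  | zero => simp [Matrix.one_fin_two]
  | succ n ih => rw [pow_succ, ih, AMat, Matrix.mul_fin_two, pow_succ]; simp

lemma AMat_mul_BMat_mul_AMat :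
    AMat * BMat * AMat = !![(1 + 2 * ω) / 3, 1; -2 / 3, -(1 + 2 * ω) / 3] := by
  ext i j
  fin_cases i <;> fin_cases j <;> simp [AMat, BMat] <;> grind [ω_sq]

lemma BMat_mul_AMat_mul_BMat :
    BMat * AMat * BMat = !![(1 + 2 * ω) / 3, 1; -2 / 3, -(1 + 2 * ω) / 3] := by
  ext i j
  fin_cases i <;> fin_cases j <;> simp [AMat, BMat] <;> grind [ω_sq]

lemma AMat_mul_BMat_mul_AMat_sq : (AMat * BMat * AMat) ^ 2 = -1 := by
  rw [AMat_mul_BMat_mul_AMat, sq, Matrix.mul_fin_two]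
  ext i j
  fin_cases i <;> fin_cases j <;> simp <;> grind [ω_sq]

/-- The generator of `G₄` with matrix `AMat`. -/
def genA : G4 :=
  ⟨.mkOfDetNeZero AMat (det_AMat ▸ isPrimitiveRoot_ω.ne_zero (by norm_num)),
    Subgroup.subset_closure (.inl rfl)⟩

/-- The generator of `G₄` with matrix `BMat`. -/
def genB : G4 :=
  ⟨.mkOfDetNeZero BMat (det_BMat ▸ isPrimitiveRoot_ω.ne_zero (by norm_num)),
    Subgroup.subset_closure (.inr rfl)⟩

lemma mat_genA : mat genA = AMat := rfl

lemma mat_genB : mat genB = BMat := rfl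

lemma mat_injective : Function.Injective mat := fun _ _ h ↦ Subtype.ext (Units.ext h)

lemma mat_one : mat 1 = 1 := rfl

lemma mat_mul (x y : G4) : mat (x * y) = mat x * mat y := rfl

lemma mat_pow (x : G4) (n : ℕ) : mat (x ^ n) = mat x ^ n := by
  simp [mat]

lemma closure_genA_genB : Subgroup.closure {genA, genB} = ⊤ := by
  refine Eq.trans ?_ Subgroup.closure_closure_coe_preimage
  congr 1
  ext x
  simp only [Set.mem_insert_iff, Set.mem_singleton_iff, ← mat_injective.eq_iff, mat_genA, mat_genB]
  rfl

lemma genA_pow_eq_pow {m n : ℕ} (h : ω ^ m = ω ^ n) : genA ^ m = genA ^ n :=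
  mat_injective (by simp only [mat_pow, mat_genA, AMat_pow, h])

lemma genA_pow_three : genA ^ 3 = 1 := by
  rw [genA_pow_eq_pow (n := 0) (isPrimitiveRoot_ω.pow_eq_one.trans (pow_zero ω).symm), pow_zero]

lemma genA_genB_braid : genA * genB * genA = genB * genA * genB :=
  mat_injective (AMat_mul_BMat_mul_AMat.trans BMat_mul_AMat_mul_BMat.symm)

lemma mat_fullTwist_pow (m : ℕ) : mat (fullTwist genA genB ^ m) = (-1) ^ m := by
  rw [fullTwist, mat_pow, mat_pow, mat_mul, mat_mul, mat_genA, mat_genB, AMat_mul_BMat_mul_AMat_sq]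

lemma det_mat_fullTwist_pow (m : ℕ) : (mat (fullTwist genA genB ^ m)).det = 1 := by
  rw [mat_fullTwist_pow, Matrix.det_pow, Matrix.det_neg]
  simp

lemma det_mat_genA_pow (n : ℕ) : (mat (genA ^ n)).det = ω ^ n := by
  rw [mat_pow, Matrix.det_pow, mat_genA, det_AMat]

lemma det_mat_conj (g x : G4) : (mat (g * x * g⁻¹)).det = (mat x).det :=
  Matrix.det_units_conj g.1 (mat x)

lemma det_mat_mul_det_mat_inv (x : G4) : (mat x).det * (mat x⁻¹).det = 1 := by
  rw [← Matrix.det_mul, ← mat_mul, mul_inv_cancel, mat_one, Matrix.det_one]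

lemma IsReflection.conj {x : G4} (hx : IsReflection x) (g : G4) : IsReflection (g * x * g⁻¹) := by
  refine ⟨fun h ↦ hx.1 (conj_eq_one_iff.1 h), ?_⟩
  have hsub : mat (g * x * g⁻¹) - 1 = mat g * (mat x - 1) * mat g⁻¹ := by
    rw [mul_sub, sub_mul, mul_one, ← mat_mul, ← mat_mul, ← mat_mul, mul_inv_cancel, mat_one]
  rw [hsub, ← hx.2]
  exact Matrix.det_units_conj g.1 (mat x - 1)

lemma IsReflection.inv {x : G4} (hx : IsReflection x) : IsReflection x⁻¹ := by
  refine ⟨inv_ne_one.2 hx.1, ?_⟩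
  have hsub : mat x⁻¹ - 1 = -(mat x⁻¹ * (mat x - 1)) := by
    rw [mul_sub, mul_one, ← mat_mul, inv_mul_cancel, mat_one, neg_sub]
  rw [hsub, Matrix.det_neg, Matrix.det_mul, hx.2, mul_zero, mul_zero]

lemma conj_mem_R1 (g x : G4) (hx : x ∈ R1) : g * x * g⁻¹ ∈ R1 :=
  ⟨hx.1.conj g, (det_mat_conj g x).trans hx.2⟩

lemma R2_eq_inv_R1 : R2 = R1⁻¹ := by
  have hω := isPrimitiveRoot_ω.pow_eq_one
  ext x
  have hdet := det_mat_mul_det_mat_inv x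
  refine ⟨fun hx ↦ ⟨hx.1.inv, ?_⟩, fun hx ↦ ⟨inv_inv x ▸ hx.1.inv, ?_⟩⟩
  · rw [hx.2] at hdet
    linear_combination ω * hdet - (mat x⁻¹).det * hω
  · rw [hx.2] at hdet
    linear_combination ω ^ 2 * hdet - (mat x).det * hω

lemma genA_mem_R1 : genA ∈ R1 := by
  refine ⟨⟨fun h ↦ ?_, ?_⟩, det_AMat⟩
  · have hdet := det_AMat
    rw [← mat_genA, h, mat_one, Matrix.det_one] at hdet
    exact isPrimitiveRoot_ω.ne_one (by norm_num) hdet.symm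
  · simp [mat_genA, AMat, Matrix.det_fin_two]

lemma mem_R1_of_isConj_genA {x : G4} (hx : IsConj genA x) : x ∈ R1 := by
  obtain ⟨g, rfl⟩ := isConj_iff.1 hx
  exact conj_mem_R1 g genA genA_mem_R1

lemma isConj_genA_conj_genB (g : G4) : IsConj genA (g * genB * g⁻¹) :=
  (isConj_of_braid genA_genB_braid).trans (isConj_iff.2 ⟨g, rfl⟩)

lemma det_eq_neg_one_of_det_sub_one_eq_zero {K : Type*} [Field K] [NeZero (2 : K)]
    {M : Matrix (Fin 2) (Fin 2) K} (h : (M - 1).det = 0) (hneg : (-M - 1).det = 0) :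
    M.det = -1 := by
  refine mul_left_cancel₀ (NeZero.ne (2 : K)) ?_
  simp only [Matrix.det_fin_two, Matrix.sub_apply, Matrix.neg_apply, Matrix.one_apply_eq,
    Matrix.one_apply_ne zero_ne_one, Matrix.one_apply_ne one_ne_zero] at h hneg ⊢
  linear_combination h + hneg

lemma fullTwist_pow_mul_eq_self {m : ℕ} {y : G4} (hy : y ∈ R1)
    (hx : fullTwist genA genB ^ m * y ∈ R1) : fullTwist genA genB ^ m * y = y := by
  have hmat := mat_mul (fullTwist genA genB ^ m) y
  rw [mat_fullTwist_pow] at hmat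
  rcases neg_one_pow_eq_or (Matrix (Fin 2) (Fin 2) ℂ) m with hm | hm
  · exact mat_injective (by rw [hmat, hm, one_mul])
  · rw [hm, neg_one_mul] at hmat
    have hneg := hx.1.2
    rw [hmat] at hneg
    exact absurd (hy.2.symm.trans (det_eq_neg_one_of_det_sub_one_eq_zero hy.1.2 hneg)) ω_ne_neg_one

lemma eq_genA_or_exists_eq_conj_genB {x : G4} (hx : x ∈ R1) :
    x = genA ∨ ∃ i < 3, x = genA ^ i * genB * (genA ^ i)⁻¹ := by
  have hbruhat : IsBruhatWord genA genB x :=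
    isBruhatWord_of_mem_closure genA_pow_three genA_genB_braid
      (closure_genA_genB ▸ Subgroup.mem_top x)
  obtain ⟨m, i, rfl | ⟨j, rfl⟩⟩ := hbruhat <;> have hdet := hx.2
  · left
    have hi : genA ^ i = genA := by
      rw [mat_mul, Matrix.det_mul, det_mat_fullTwist_pow, det_mat_genA_pow, one_mul] at hdet
      rw [genA_pow_eq_pow (hdet.trans (pow_one ω).symm), pow_one]
    rw [hi] at hx ⊢
    exact fullTwist_pow_mul_eq_self genA_mem_R1 hx
  · right
    have hij : genA ^ j = (genA ^ i)⁻¹ := by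
      simp only [mat_mul, Matrix.det_mul, det_mat_fullTwist_pow, det_mat_genA_pow, mat_genB,
        det_BMat, one_mul] at hdet
      have hω : ω ^ (j + i) = ω ^ 0 :=
        mul_right_cancel₀ (isPrimitiveRoot_ω.ne_zero (by norm_num)) (by linear_combination hdet)
      refine eq_inv_of_mul_eq_one_left ?_
      rw [← pow_add, genA_pow_eq_pow hω, pow_zero]
    rw [hij] at hx ⊢
    rw [fullTwist_pow_mul_eq_self (mem_R1_of_isConj_genA (isConj_genA_conj_genB _)) hx]
    exact ⟨i % 3, Nat.mod_lt _ (by norm_num), by rw [← pow_eq_pow_mod i genA_pow_three]⟩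

lemma isConj_genA_of_mem_R1 {x : G4} (hx : x ∈ R1) : IsConj genA x := by
  rcases eq_genA_or_exists_eq_conj_genB hx with rfl | ⟨i, -, rfl⟩
  exacts [IsConj.refl genA, isConj_genA_conj_genB _]

lemma encard_R1_le_four : R1.encard ≤ 4 := by
  have hsub : R1 ⊆ insert genA
      ((fun i : ℕ ↦ genA ^ i * genB * (genA ^ i)⁻¹) '' (Finset.range 3 : Set ℕ)) := by
    intro x hx
    rcases eq_genA_or_exists_eq_conj_genB hx with rfl | ⟨i, hi, rfl⟩
    · exact Set.mem_insert _ _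
    · exact .inr ⟨i, by simpa using hi, rfl⟩
  calc R1.encard ≤ _ := Set.encard_le_encard hsub
    _ ≤ _ + 1 := Set.encard_insert_le _ _
    _ ≤ (Finset.range 3 : Set ℕ).encard + 1 := by gcongr; exact Set.encard_image_le _ _
    _ = 4 := by rw [Set.encard_coe_eq_coe_finsetCard]; rfl

lemma eq_genA_of_commute {y : G4} (hy : y ∈ R1) (hcomm : Commute genA y) : y = genA := by
  rcases eq_genA_or_exists_eq_conj_genB hy with rfl | ⟨i, -, rfl⟩
  · rfl
  have hA : genA ^ i * genA * (genA ^ i)⁻¹ = genA := by group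
  have hAB : Commute genA genB := by
    rw [← Commute.conj_iff (genA ^ i), hA]
    exact hcomm
  rw [← eq_of_braid_of_commute genA_genB_braid hAB, hA]

lemma R1_pairwise_not_commute : R1.Pairwise fun x y ↦ ¬Commute x y := by
  intro x hx y hy hxy hcomm
  obtain ⟨g, rfl⟩ := isConj_iff.1 (isConj_genA_of_mem_R1 hx)
  obtain ⟨z, rfl⟩ : ∃ z, g * z * g⁻¹ = y := ⟨g⁻¹ * y * g, by group⟩
  have hz : z ∈ R1 := by simpa [mul_assoc] using conj_mem_R1 g⁻¹ _ hy
  exact hxy (by rw [eq_genA_of_commute hz ((Commute.conj_iff g).1 hcomm)])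

theorem isHurwitzMerging_R1 : IsHurwitzMerging R1 where
  conj_mem := conj_mem_R1
  pairwise_not_commute := R1_pairwise_not_commute
  encard_le_five := encard_R1_le_four.trans (by decide)

theorem isHurwitzMerging_R2 : IsHurwitzMerging R2 :=
  R2_eq_inv_R1 ▸ isHurwitzMerging_R1.inv

end ReflectionGroup

theorem g4_four_same_class_pair_general (k : ℕ) (t : Fin k → G4)
    (h4 : 4 ≤ {i : Fin k | t i ∈ R1}.ncard ∨ 4 ≤ {i : Fin k | t i ∈ R2}.ncard) :
    ∃ s : Fin k → G4, SameHurwitzOrbit t s ∧ HasConsecutiveEqualPair s :=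
  h4.elim isHurwitzMerging_R1.exists_hasConsecutiveEqualPair
    isHurwitzMerging_R2.exists_hasConsecutiveEqualPair

theorem g4_four_same_class_pair (k : ℕ) (t : Fin k → G4)
    (ht : ∀ i, IsReflection (t i))
    (h4 : 4 ≤ {i : Fin k | t i ∈ R1}.ncard ∨ 4 ≤ {i : Fin k | t i ∈ R2}.ncard) :
    ∃ s : Fin k → G4, SameHurwitzOrbit t s ∧ HasConsecutiveEqualPair s :=
  g4_four_same_class_pair_general k t h4
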